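/- Let M ⊆ ℝ^n × ℝ^n × ℝ^m × ℝ^m (elements written (f_S, e_S, y, u), with flows (f_S, y) and efforts (e_S, u)) be a maximal monotone relation. Assume (s1) 0 ∈ rint Π(M, F_S) (the projection onto the f_S-component), and (s2) there exists ē ∈ rint {e_S : (0, e_S) ∈ Π(M, F_S × E_S)}. Then the steady-state relation M_s := {(y, u) : there exists e_S with (0, e_S, y, u) ∈ M} is a maximal monotone relation in ℝ^m × ℝ^m. -/

import Mathlib

/-- The duality pairing (standard inner product) on `ℝ^n`. -/
noncomputable def dot {n : ℕ} (e f : Fin n → ℝ) : ℝ := ∑ i, e i * f i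

/-- Monotone relation with elements `(f_S, e_S, y, u)`, flows `(f_S, y)` and
efforts `(e_S, u)`. -/
def MonoPH {n m : ℕ}
    (M : Set ((Fin n → ℝ) × (Fin n → ℝ) × (Fin m → ℝ) × (Fin m → ℝ))) : Prop :=
  ∀ fS eS y u fS' eS' y' u',
    (fS, eS, y, u) ∈ M → (fS', eS', y', u') ∈ M →
    0 ≤ dot (eS - eS') (fS - fS') + dot (u - u') (y - y')

/-- Maximal monotone relation (elements `(f_S, e_S, y, u)`). -/
def MaxMonoPH {n m : ℕ}
    (M : Set ((Fin n → ℝ) × (Fin n → ℝ) × (Fin m → ℝ) × (Fin m → ℝ))) : Prop :=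
  MonoPH M ∧ ∀ M', MonoPH M' → M ⊆ M' → M' = M

/-- Monotone relation `M ⊆ Y × U` with elements `(y, u)` (flow `y`, effort `u`). -/
def Mono2 {m : ℕ} (M : Set ((Fin m → ℝ) × (Fin m → ℝ))) : Prop :=
  ∀ p ∈ M, ∀ q ∈ M, 0 ≤ dot (p.2 - q.2) (p.1 - q.1)

/-- Maximal monotone relation in `Y × U`. -/
def MaxMono2 {m : ℕ} (M : Set ((Fin m → ℝ) × (Fin m → ℝ))) : Prop :=
  Mono2 M ∧ ∀ M', Mono2 M' → M ⊆ M' → M' = M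

/-- Relative interior `rint S := rint (cl S)`. -/
noncomputable def rint {V : Type*} [AddCommGroup V] [Module ℝ V] [TopologicalSpace V]
    (S : Set V) : Set V :=
  intrinsicInterior ℝ (closure S)

/-!
Minty's criterion reduces maximality of the steady-state relation to solving, for every `w`,
`(0, e, y, w - y) ∈ M` for some `e` and `y`. By maximality of `M` this membership is a family of
convex quadratic inequalities in `(e, y)`, one for each element of `M`. Finitely many of them are
solvable by the minimax theorem: the weights on the inequalities also define a barycentre of
the corresponding points of `M`, and monotonicity makes the weighted sum of the inequalities hold
there. Since a linear functional that is nonpositive on the flows `f_S` vanishes on them by (s1),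
finitely many inequalities already confine `(e, y)` to a bounded set, once `e` is taken in the span
of the flows. Compactness then yields a common solution.
-/

open scoped RealInnerProductSpace Matrix Topology
open Set Bornology

section Minimax

theorem exists_forall_nonpos_of_forall_stdSimplex {ι X : Type*} [Fintype ι]
    [AddCommGroup X] [Module ℝ X] [TopologicalSpace X] [IsTopologicalAddGroup X]
    [ContinuousSMul ℝ X] {K : Set X} (hK : IsCompact K) (hKne : K.Nonempty) {h : ι → X → ℝ}
    (hconv : ∀ i, ConvexOn ℝ K (h i)) (hcont : ∀ i, ContinuousOn (h i) K)
    (hweights : ∀ μ ∈ stdSimplex ℝ ι, ∃ x ∈ K, ∑ i, μ i * h i x ≤ 0) :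
    ∃ x ∈ K, ∀ i, h i x ≤ 0 := by
  classical
  rcases isEmpty_or_nonempty ι with hι | ⟨⟨i₀⟩⟩
  · exact hKne.imp fun x hx => ⟨hx, fun i => hι.elim i⟩
  have hKconv : Convex ℝ K := (hconv i₀).1
  have convexOn_sum : ∀ μ ∈ stdSimplex ℝ ι, ConvexOn ℝ K fun x => ∑ i, μ i * h i x := by
    intro μ hμ
    simpa only [Finset.sum_fn] using Finset.sum_induction (fun i x => μ i * h i x) (ConvexOn ℝ K)
      (fun _ _ => ConvexOn.add) (convexOn_const 0 hKconv) fun i _ => (hconv i).smul (hμ.1 i)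
  have concaveOn_sum : ∀ x, ConcaveOn ℝ (stdSimplex ℝ ι) fun μ => ∑ i, μ i * h i x := fun x =>
    (Fintype.linearCombination ℝ fun i => h i x).concaveOn (convex_stdSimplex ℝ ι)
  obtain ⟨x, hx, μ, hμ, hsaddle⟩ := Sion.exists_isSaddlePointOn
    (f := fun x μ => ∑ i, μ i * h i x) hKne hKconv hK
    (fun μ _ => ContinuousOn.lowerSemicontinuousOn (by fun_prop))
    (fun μ hμ => (convexOn_sum μ hμ).quasiconvexOn)
    (convex_stdSimplex ℝ ι) ⟨_, single_mem_stdSimplex ℝ i₀⟩ (isCompact_stdSimplex ℝ ι)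
    (fun x _ => ContinuousOn.upperSemicontinuousOn (by fun_prop))
    (fun x _ => (concaveOn_sum x).quasiconcaveOn)
  obtain ⟨x', hx', hx'_nonpos⟩ := hweights μ hμ
  refine ⟨x, hx, fun i => ?_⟩
  calc h i x = ∑ j, Pi.single (M := fun _ => ℝ) i 1 j * h j x := by simp [Pi.single_apply]
    _ ≤ ∑ j, μ j * h j x' := hsaddle x' hx' _ (single_mem_stdSimplex ℝ i)
    _ ≤ 0 := hx'_nonpos

theorem sum_sum_mul_mul_nonpos {ι : Type*} [Fintype ι] {μ : ι → ℝ} (hμ : ∀ i, 0 ≤ μ i)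
    {g : ι → ι → ℝ} (hg : ∀ i j, g i j + g j i ≤ 0) : ∑ i, ∑ j, μ i * (μ j * g i j) ≤ 0 := by
  have swap : ∑ i, ∑ j, μ i * (μ j * g i j) = ∑ i, ∑ j, μ i * (μ j * g j i) := by
    rw [Finset.sum_comm]
    simp only [mul_left_comm]
  have symmetrized : ∑ i, ∑ j, μ i * (μ j * (g i j + g j i)) ≤ 0 :=
    Finset.sum_nonpos fun i _ => Finset.sum_nonpos fun j _ =>
      mul_nonpos_of_nonneg_of_nonpos (hμ i) (mul_nonpos_of_nonneg_of_nonpos (hμ j) (hg i j))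
  simp only [mul_add, Finset.sum_add_distrib] at symmetrized
  linarith

end Minimax

section RelativeInterior

variable {V : Type*} [AddCommGroup V] [Module ℝ V] [TopologicalSpace V]

theorem exists_pos_smul_sub_add_mem_of_mem_intrinsicInterior [ContinuousAdd V] [ContinuousSMul ℝ V]
    {S : Set V} {x s : V} (hx : x ∈ intrinsicInterior ℝ S) (hs : s ∈ S) :
    ∃ t : ℝ, 0 < t ∧ t • (x - s) + x ∈ S := by
  obtain ⟨x', hx', rfl⟩ := mem_intrinsicInterior.1 hx
  let ray : ℝ → affineSpan ℝ S := fun t => ⟨t • (x' - s) + x',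
    (affineSpan ℝ S).smul_vsub_vadd_mem t x'.2 (subset_affineSpan ℝ S hs) x'.2⟩
  have hray : Continuous ray := by fun_prop
  have hray0 : ray 0 = x' := Subtype.ext (by simp [ray])
  have hnear : ∀ᶠ t in 𝓝[>] (0 : ℝ), ray t ∈ interior ((↑) ⁻¹' S) :=
    (hray.tendsto' 0 x' hray0).mono_left nhdsWithin_le_nhds (isOpen_interior.mem_nhds hx')
  obtain ⟨t, hmem, ht⟩ := (hnear.and self_mem_nhdsWithin).exists
  have hray_mem : ray t ∈ ((↑) ⁻¹' S : Set (affineSpan ℝ S)) := interior_subset hmem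
  exact ⟨t, ht, hray_mem⟩

theorem eq_of_forall_le_of_mem_rint [ContinuousAdd V] [ContinuousSMul ℝ V]
    {S : Set V} {x : V} (hx : x ∈ rint S) (φ : V →L[ℝ] ℝ) (hφ : ∀ s ∈ S, φ s ≤ φ x) :
    ∀ s ∈ S, φ s = φ x := by
  intro s hs
  have hφ_closure : ∀ z ∈ closure S, φ z ≤ φ x := fun z hz =>
    closure_minimal hφ (isClosed_le φ.continuous continuous_const) hz
  obtain ⟨t, ht, hmem⟩ :=
    exists_pos_smul_sub_add_mem_of_mem_intrinsicInterior hx (subset_closure hs)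
  have hle : t * (φ x - φ s) + φ x ≤ φ x := by simpa using hφ_closure _ hmem
  refine le_antisymm (hφ s hs) ?_
  have := nonpos_of_mul_nonpos_right (a := t) (b := φ x - φ s) (by linarith) ht
  linarith

end RelativeInterior

section Boundedness

theorem nonempty_iInter_of_isBounded_biInter {ι X : Type*} [PseudoMetricSpace X] [ProperSpace X]
    {S : ι → Set X} (hclosed : ∀ i, IsClosed (S i))
    (hfinite : ∀ t : Finset ι, (⋂ i ∈ t, S i).Nonempty)
    (hbounded : ∃ t : Finset ι, IsBounded (⋂ i ∈ t, S i)) : (⋂ i, S i).Nonempty := by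
  classical
  obtain ⟨t, ht⟩ := hbounded
  have hcompact : IsCompact (⋂ i ∈ t, S i) :=
    Metric.isCompact_of_isClosed_isBounded (isClosed_biInter fun i _ => hclosed i) ht
  refine (hcompact.inter_iInter_nonempty S hclosed fun u => ?_).mono inter_subset_right
  simpa only [Finset.mem_union, iInter_or, iInter_inter_distrib] using hfinite (t ∪ u)

theorem exists_finset_forall_isBounded_setOf_le {ι E : Type*} [NormedAddCommGroup E]
    [NormedSpace ℝ E] [FiniteDimensional ℝ E] {φ : ι → E →L[ℝ] ℝ}
    (hφ : ∀ d ≠ 0, ∃ i, 0 < φ i d) :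
    ∃ t : Finset ι, ∀ c : ι → ℝ, IsBounded {d | ∀ i ∈ t, φ i d ≤ c i} := by
  have : ProperSpace E := FiniteDimensional.proper_real E
  obtain ⟨t, ht⟩ := (isCompact_sphere (0 : E) 1).elim_finite_subcover (fun i => {d | 0 < φ i d})
    (fun i => isOpen_lt continuous_const (φ i).continuous)
    (fun d hd => mem_iUnion.2 (hφ d (ne_zero_of_mem_unit_sphere ⟨d, hd⟩)))
  have sum_pos : ∀ d ∈ Metric.sphere (0 : E) 1, 0 < ∑ i ∈ t, max (φ i d) 0 := by
    intro d hd
    obtain ⟨i, hit, hi⟩ := mem_iUnion₂.1 (ht hd)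
    exact Finset.sum_pos' (fun _ _ => le_max_right _ _) ⟨i, hit, lt_max_of_lt_left hi⟩
  obtain ⟨δ, hδ, hδ_le⟩ := (isCompact_sphere (0 : E) 1).exists_forall_le'
    (f := fun d => ∑ i ∈ t, max (φ i d) 0) (by fun_prop) sum_pos
  refine ⟨t, fun c => isBounded_iff_forall_norm_le.2 ⟨(∑ i ∈ t, |c i|) / δ, fun d hd => ?_⟩⟩
  rcases eq_or_ne d 0 with rfl | hd0
  · rw [norm_zero]
    positivity
  have hnorm : 0 < ‖d‖ := norm_pos_iff.2 hd0
  have hle : δ ≤ ‖d‖⁻¹ * ∑ i ∈ t, |c i| := calc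
    δ ≤ ∑ i ∈ t, max (φ i (‖d‖⁻¹ • d)) 0 := hδ_le _ (by simp [norm_smul, hnorm.ne'])
    _ ≤ ∑ i ∈ t, ‖d‖⁻¹ * |c i| := by
      refine Finset.sum_le_sum fun i hi => max_le ?_ (by positivity)
      rw [map_smul, smul_eq_mul]
      gcongr
      exact (hd i hi).trans (le_abs_self _)
    _ = ‖d‖⁻¹ * ∑ i ∈ t, |c i| := (Finset.mul_sum _ _ _).symm
  rwa [le_div_iff₀ hδ, ← le_inv_mul_iff₀ hnorm]

variable {H : Type*} [NormedAddCommGroup H] [InnerProductSpace ℝ H]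

theorem real_inner_sub_sub_eq_norm_sub_midpoint_sq (x a b : H) :
    ⟪x - a, x - b⟫ = ‖x - midpoint ℝ a b‖ ^ 2 - ‖a - b‖ ^ 2 / 4 := by
  simp only [midpoint_eq_smul_add, ← real_inner_self_eq_norm_sq, inner_sub_left, inner_sub_right,
    inner_add_left, inner_add_right, real_inner_smul_left, real_inner_smul_right, invOf_eq_inv,
    real_inner_comm a x, real_inner_comm b x, real_inner_comm b a]
  ring

theorem isBounded_setOf_inner_sub_sub_le (a b : H) (c : ℝ) :
    IsBounded {x | ⟪x - a, x - b⟫ ≤ c} := by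
  refine Metric.isBounded_closedBall.subset
    (t := Metric.closedBall (midpoint ℝ a b) √(c + ‖a - b‖ ^ 2 / 4)) fun x hx => ?_
  rw [mem_ofPred_eq, real_inner_sub_sub_eq_norm_sub_midpoint_sq] at hx
  rw [mem_closedBall_iff_norm]
  exact Real.le_sqrt_of_sq_le (by linarith)

end Boundedness

section MonotoneFamily

variable {ι E H : Type*} [NormedAddCommGroup E] [InnerProductSpace ℝ E]
  [NormedAddCommGroup H] [InnerProductSpace ℝ H]

/-- A monotone relation in `E × E × H × H`, presented as the range of the family
`i ↦ (f i, e i, y i, u i)`, so that finite subrelations and linear images are reindexings and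
compositions. -/
def IsMonotoneFamily (f e : ι → E) (y u : ι → H) : Prop :=
  ∀ i j, 0 ≤ ⟪e i - e j, f i - f j⟫ + ⟪u i - u j, y i - y j⟫

/-- The pairing of the increments between `(f, e, y, u)` and `(0, x.1, x.2, w - x.2)`, with the sign
reversed to make it convex in `x`: it is nonpositive exactly when the two points are monotonically
related. -/
def resolventGap (w : H) (f e : E) (y u : H) (x : E × H) : ℝ :=
  ⟪x.1 - e, f⟫ + ⟪x.2 - (w - u), x.2 - y⟫

theorem continuous_resolventGap (w : H) (f e : E) (y u : H) :
    Continuous (resolventGap w f e y u) := by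
  unfold resolventGap
  fun_prop

theorem convexOn_resolventGap (w : H) (f e : E) (y u : H) :
    ConvexOn ℝ univ (resolventGap w f e y u) := by
  refine ⟨convex_univ, fun x _ x' _ a b ha hb hab => ?_⟩
  obtain rfl : b = 1 - a := by linarith
  have defect : a * resolventGap w f e y u x + (1 - a) * resolventGap w f e y u x'
      - resolventGap w f e y u (a • x + (1 - a) • x') = a * (1 - a) * ‖x.2 - x'.2‖ ^ 2 := by
    simp only [resolventGap, ← real_inner_self_eq_norm_sq, Prod.fst_add, Prod.snd_add,
      Prod.smul_fst, Prod.smul_snd, inner_sub_left, inner_sub_right, inner_add_left,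
      inner_add_right, real_inner_smul_left, real_inner_smul_right, real_inner_comm x.2 x'.2]
    ring
  have : 0 ≤ a * (1 - a) * ‖x.2 - x'.2‖ ^ 2 := by positivity
  simp only [smul_eq_mul]
  linarith

namespace IsMonotoneFamily

variable {f e : ι → E} {y u : ι → H}

theorem sum_mul_resolventGap_barycenter_nonpos [Fintype ι] (hmono : IsMonotoneFamily f e y u)
    (w : H) {μ : ι → ℝ} (hμ : μ ∈ stdSimplex ℝ ι) :
    ∑ i, μ i * resolventGap w (f i) (e i) (y i) (u i) (∑ j, μ j • (e j, y j)) ≤ 0 := by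
  set b : E × H := ∑ j, μ j • (e j, y j) with hb
  have sub_eq_sum : ∀ i, b - (e i, y i) = ∑ j, μ j • (e j - e i, y j - y i) := by
    intro i
    simp only [← Prod.mk_sub_mk, smul_sub, Finset.sum_sub_distrib, ← Finset.sum_smul, hμ.2,
      one_smul, hb]
  let g : ι → ι → ℝ := fun i j => ⟪e j - e i, f i⟫ + ⟪b.2 - (w - u i), y j - y i⟫
  have gap_eq : ∀ i, resolventGap w (f i) (e i) (y i) (u i) b = ∑ j, μ j * g i j := by
    intro i
    have he : b.1 - e i = ∑ j, μ j • (e j - e i) := by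
      simpa [Prod.fst_sum] using congrArg Prod.fst (sub_eq_sum i)
    have hy : b.2 - y i = ∑ j, μ j • (y j - y i) := by
      simpa [Prod.snd_sum] using congrArg Prod.snd (sub_eq_sum i)
    simp only [resolventGap, he, hy, g, sum_inner, inner_sum, real_inner_smul_left,
      real_inner_smul_right, mul_add, Finset.sum_add_distrib]
  -- The terms `⟪b.2 - w, y j - y i⟫` of `g` are antisymmetric, so only the monotonicity pairing
  -- survives the symmetrization.
  have g_add_swap : ∀ i j, g i j + g j i ≤ 0 := by
    intro i j
    have := hmono i j
    simp only [g, inner_sub_left, inner_sub_right] at this ⊢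
    linarith
  simpa only [gap_eq, Finset.mul_sum] using sum_sum_mul_mul_nonpos hμ.1 g_add_swap

theorem exists_forall_resolventGap_nonpos_of_finite [Finite ι] (hmono : IsMonotoneFamily f e y u)
    (w : H) : ∃ x, ∀ i, resolventGap w (f i) (e i) (y i) (u i) x ≤ 0 := by
  have := Fintype.ofFinite ι
  rcases isEmpty_or_nonempty ι with hι | hι
  · exact ⟨0, fun i => hι.elim i⟩
  let K : Set (E × H) := convexHull ℝ (range fun i => (e i, y i))
  have barycenter_mem : ∀ μ ∈ stdSimplex ℝ ι, ∑ j, μ j • (e j, y j) ∈ K := fun μ hμ =>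
    (convex_convexHull ℝ _).sum_mem (fun j _ => hμ.1 j) hμ.2
      fun j _ => subset_convexHull ℝ _ (mem_range_self j)
  obtain ⟨x, -, hx⟩ := exists_forall_nonpos_of_forall_stdSimplex
    ((finite_range _).isCompact_convexHull ℝ) (range_nonempty _).convexHull
    (fun i => (convexOn_resolventGap w (f i) (e i) (y i) (u i)).subset (subset_univ K)
      (convex_convexHull ℝ _))
    (fun i => (continuous_resolventGap w (f i) (e i) (y i) (u i)).continuousOn)
    fun μ hμ => ⟨_, barycenter_mem μ hμ, hmono.sum_mul_resolventGap_barycenter_nonpos w hμ⟩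
  exact ⟨x, hx⟩

end IsMonotoneFamily

theorem inner_fst_le_of_resolventGap_nonpos {w y u : H} {f e : E} {x : E × H}
    (hx : resolventGap w f e y u x ≤ 0) : ⟪x.1, f⟫ ≤ ⟪e, f⟫ + ‖w - u - y‖ ^ 2 / 4 := by
  rw [resolventGap, inner_sub_left, real_inner_sub_sub_eq_norm_sub_midpoint_sq] at hx
  linarith [sq_nonneg ‖x.2 - midpoint ℝ (w - u) y‖]

theorem inner_snd_le_of_resolventGap_nonpos {w y u : H} {f e : E} {x : E × H}
    (hx : resolventGap w f e y u x ≤ 0) {R : ℝ} (hR : ‖x.1‖ ≤ R) :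
    ⟪x.2 - (w - u), x.2 - y⟫ ≤ (‖e‖ + R) * ‖f‖ :=
  calc ⟪x.2 - (w - u), x.2 - y⟫ ≤ ⟪e - x.1, f⟫ := by
        rw [resolventGap, ← neg_sub e x.1, inner_neg_left] at hx
        linarith
    _ ≤ ‖e - x.1‖ * ‖f‖ := real_inner_le_norm _ _
    _ ≤ (‖e‖ + R) * ‖f‖ := by
        gcongr
        exact (norm_sub_le _ _).trans (by gcongr)

theorem exists_finset_isBounded_setOf_resolventGap_nonpos [FiniteDimensional ℝ E] [Nonempty ι]
    {f : ι → E} (hf : ∀ d ≠ 0, ∃ i, 0 < ⟪d, f i⟫) (e : ι → E) (y u : ι → H) (w : H) :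
    ∃ t : Finset ι, IsBounded (⋂ i ∈ t, {x | resolventGap w (f i) (e i) (y i) (u i) x ≤ 0}) := by
  classical
  obtain ⟨i₀⟩ := ‹Nonempty ι›
  obtain ⟨t, ht⟩ := exists_finset_forall_isBounded_setOf_le (φ := fun i => innerSL ℝ (f i))
    (by simpa only [innerSL_apply_apply, real_inner_comm] using hf)
  obtain ⟨R, hR⟩ := (ht fun i => ⟪e i, f i⟫ + ‖w - u i - y i‖ ^ 2 / 4).exists_norm_le
  refine ⟨insert i₀ t, ((Metric.isBounded_closedBall (x := (0 : E)) (r := R)).prod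
    (isBounded_setOf_inner_sub_sub_le (w - u i₀) (y i₀) ((‖e i₀‖ + R) * ‖f i₀‖))).subset ?_⟩
  intro x hx
  rw [mem_iInter₂] at hx
  have hxR : ‖x.1‖ ≤ R := hR x.1 fun i hi =>
    (real_inner_comm _ _).trans_le
      (inner_fst_le_of_resolventGap_nonpos (hx i (Finset.mem_insert_of_mem hi)))
  exact ⟨mem_closedBall_zero_iff.2 hxR,
    inner_snd_le_of_resolventGap_nonpos (hx i₀ (Finset.mem_insert_self _ _)) hxR⟩

namespace IsMonotoneFamily

variable [FiniteDimensional ℝ E] [FiniteDimensional ℝ H] {f e : ι → E} {y u : ι → H}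

theorem exists_forall_resolventGap_nonpos_of_forall_exists_pos (hmono : IsMonotoneFamily f e y u)
    (hf : ∀ d ≠ 0, ∃ i, 0 < ⟪d, f i⟫) (w : H) :
    ∃ x, ∀ i, resolventGap w (f i) (e i) (y i) (u i) x ≤ 0 := by
  rcases isEmpty_or_nonempty ι with hι | hι
  · exact ⟨0, fun i => hι.elim i⟩
  have : ProperSpace (E × H) := FiniteDimensional.proper_real _
  have solvable_finset : ∀ t : Finset ι,
      (⋂ i ∈ t, {x | resolventGap w (f i) (e i) (y i) (u i) x ≤ 0}).Nonempty := by
    intro t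
    have hmono_t : IsMonotoneFamily (fun i : t => f i) (fun i => e i) (fun i => y i)
        (fun i => u i) := fun i j => hmono i j
    obtain ⟨x, hx⟩ := hmono_t.exists_forall_resolventGap_nonpos_of_finite w
    exact ⟨x, mem_iInter₂.2 fun i hi => hx ⟨i, hi⟩⟩
  obtain ⟨x, hx⟩ := nonempty_iInter_of_isBounded_biInter
    (fun i => isClosed_le (continuous_resolventGap w _ _ _ _) continuous_const) solvable_finset
    (exists_finset_isBounded_setOf_resolventGap_nonpos hf e y u w)
  exact ⟨x, fun i => mem_iInter.1 hx i⟩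

theorem exists_forall_resolventGap_nonpos (hmono : IsMonotoneFamily f e y u)
    (hf : ∀ d, (∀ i, ⟪d, f i⟫ ≤ 0) → ∀ i, ⟪d, f i⟫ = 0) (w : H) :
    ∃ x, ∀ i, resolventGap w (f i) (e i) (y i) (u i) x ≤ 0 := by
  let V : Submodule ℝ E := Submodule.span ℝ (range f)
  let fV : ι → V := fun i => ⟨f i, Submodule.subset_span (mem_range_self i)⟩
  let eV : ι → V := fun i => V.orthogonalProjectionOnto (e i)
  have hmonoV : IsMonotoneFamily fV eV y u := by
    intro i j
    simp only [fV, eV, ← map_sub, V.inner_orthogonalProjectionOnto_eq_of_mem_right]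
    exact hmono i j
  have hfV : ∀ d : V, d ≠ 0 → ∃ i, 0 < ⟪d, fV i⟫ := by
    intro d
    contrapose!
    intro hd
    have hV : V ≤ LinearMap.ker (innerₗ E (d : E)) :=
      Submodule.span_le.2 (range_subset_iff.2 (hf d hd))
    exact Subtype.ext (inner_self_eq_zero.1 (hV d.2))
  obtain ⟨x, hx⟩ := hmonoV.exists_forall_resolventGap_nonpos_of_forall_exists_pos hfV w
  refine ⟨(x.1, x.2), fun i => ?_⟩
  simpa only [resolventGap, inner_sub_left, eV, fV, Submodule.coe_inner,
    V.inner_orthogonalProjectionOnto_eq_of_mem_right] using hx i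

end IsMonotoneFamily

end MonotoneFamily

section SteadyState

variable {n m : ℕ} {M : Set ((Fin n → ℝ) × (Fin n → ℝ) × (Fin m → ℝ) × (Fin m → ℝ))}

theorem dot_eq_inner_toLp (a b : Fin n → ℝ) : dot a b = ⟪WithLp.toLp 2 a, WithLp.toLp 2 b⟫ := by
  rw [EuclideanSpace.inner_toLp_toLp, star_trivial, dotProduct_comm]
  rfl

theorem dot_sub_sub_comm (a b c d : Fin n → ℝ) : dot (a - b) (c - d) = dot (b - a) (d - c) := by
  rw [← neg_sub b a, ← neg_sub d c]
  exact neg_dotProduct_neg (b - a) (d - c)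

theorem MaxMonoPH.mem_of_forall_nonneg (hM : MaxMonoPH M) {f e : Fin n → ℝ} {y u : Fin m → ℝ}
    (hrel : ∀ f' e' y' u', (f', e', y', u') ∈ M →
      0 ≤ dot (e - e') (f - f') + dot (u - u') (y - y')) : (f, e, y, u) ∈ M := by
  have hinsert : MonoPH (insert (f, e, y, u) M) := by
    intro f₁ e₁ y₁ u₁ f₂ e₂ y₂ u₂ h₁ h₂
    simp only [mem_insert_iff, Prod.mk.injEq] at h₁ h₂
    rcases h₁ with ⟨rfl, rfl, rfl, rfl⟩ | h₁ <;> rcases h₂ with ⟨rfl, rfl, rfl, rfl⟩ | h₂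
    · simp [dot]
    · exact hrel _ _ _ _ h₂
    · rw [dot_sub_sub_comm e₁, dot_sub_sub_comm u₁]
      exact hrel _ _ _ _ h₁
    · exact hM.1 _ _ _ _ _ _ _ _ h₁ h₂
  rw [← hM.2 _ hinsert (subset_insert _ _)]
  exact mem_insert _ _

theorem MonoPH.mono2_steadyState (hM : MonoPH M) :
    Mono2 {p : (Fin m → ℝ) × (Fin m → ℝ) | ∃ eS : Fin n → ℝ, (0, eS, p.1, p.2) ∈ M} := by
  rintro p ⟨e, hp⟩ q ⟨e', hq⟩
  simpa [dot] using hM _ _ _ _ _ _ _ _ hp hq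

theorem Mono2.maxMono2_of_forall_exists_mem_sub {N : Set ((Fin m → ℝ) × (Fin m → ℝ))}
    (hN : Mono2 N) (hsurj : ∀ w, ∃ y, (y, w - y) ∈ N) : MaxMono2 N := by
  refine ⟨hN, fun N' hN' hsub => Subset.antisymm ?_ hsub⟩
  rintro ⟨y', u'⟩ hmem
  obtain ⟨y, hy⟩ := hsurj (y' + u')
  have hpair : 0 ≤ (u' - (y' + u' - y)) ⬝ᵥ (y' - y) := hN' _ hmem _ (hsub hy)
  rw [show u' - (y' + u' - y) = -(y' - y) by abel, neg_dotProduct, neg_nonneg] at hpair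
  have hyy : y' = y := sub_eq_zero.1 (dotProduct_self_eq_zero.1
    (hpair.antisymm (by simpa using dotProduct_self_star_nonneg (y' - y))))
  simpa [hyy] using hy

theorem MaxMonoPH.exists_zero_flow_mem (hM : MaxMonoPH M)
    (hflow : (0 : Fin n → ℝ) ∈ rint {fS : Fin n → ℝ | ∃ eS y u, (fS, eS, y, u) ∈ M})
    (w : Fin m → ℝ) : ∃ e y, ((0 : Fin n → ℝ), e, y, w - y) ∈ M := by
  have hmono : IsMonotoneFamily (fun q : M => WithLp.toLp 2 q.1.1) (fun q => WithLp.toLp 2 q.1.2.1)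
      (fun q => WithLp.toLp 2 q.1.2.2.1) (fun q => WithLp.toLp 2 q.1.2.2.2) := by
    intro p q
    simpa only [dot_eq_inner_toLp, WithLp.toLp_sub] using hM.1 _ _ _ _ _ _ _ _ p.2 q.2
  have hsupport : ∀ d : EuclideanSpace ℝ (Fin n), (∀ q : M, ⟪d, WithLp.toLp 2 q.1.1⟫ ≤ 0) →
      ∀ q : M, ⟪d, WithLp.toLp 2 q.1.1⟫ = 0 := by
    intro d hd q
    let φ : (Fin n → ℝ) →L[ℝ] ℝ :=
      innerSL ℝ d ∘L (EuclideanSpace.equiv (Fin n) ℝ).symm.toContinuousLinearMap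
    have hφ := eq_of_forall_le_of_mem_rint hflow φ (by
      rintro f ⟨e, y, u, hmem⟩
      simpa [φ] using hd ⟨_, hmem⟩) q.1.1 ⟨_, _, _, q.2⟩
    simpa [φ] using hφ
  obtain ⟨x, hx⟩ := hmono.exists_forall_resolventGap_nonpos hsupport (WithLp.toLp 2 w)
  refine ⟨WithLp.ofLp x.1, WithLp.ofLp x.2, hM.mem_of_forall_nonneg fun f e y u hmem => ?_⟩
  have hgap := hx ⟨_, hmem⟩
  simp only [resolventGap, dot_eq_inner_toLp, WithLp.toLp_sub, WithLp.toLp_zero, WithLp.toLp_ofLp,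
    inner_sub_left, inner_sub_right, inner_zero_right] at hgap ⊢
  linarith

theorem steadyState_maxMonotone_general {n m : ℕ}
    (M : Set ((Fin n → ℝ) × (Fin n → ℝ) × (Fin m → ℝ) × (Fin m → ℝ)))
    (hM : MaxMonoPH M)
    (hs1 : (0 : Fin n → ℝ) ∈ rint {fS : Fin n → ℝ | ∃ eS y u, (fS, eS, y, u) ∈ M}) :
    MaxMono2 {p : (Fin m → ℝ) × (Fin m → ℝ) | ∃ eS : Fin n → ℝ,
      ((0 : Fin n → ℝ), eS, p.1, p.2) ∈ M} := by
  refine hM.1.mono2_steadyState.maxMono2_of_forall_exists_mem_sub fun w => ?_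
  obtain ⟨e, y, hmem⟩ := hM.exists_zero_flow_mem hs1 w
  exact ⟨y, e, hmem⟩

end SteadyState

/-- Under conditions (s1) `0 ∈ rint Π(M, F_S)` and (s2)
`∃ ē ∈ rint {e_S : (0, e_S) ∈ Π(M, F_S × E_S)}`, the steady-state relation
`M_s = {(y,u) : ∃ e_S, (0, e_S, y, u) ∈ M}` of a maximal monotone relation
`M` is maximal monotone. -/
theorem steadyState_maxMonotone {n m : ℕ}
    (M : Set ((Fin n → ℝ) × (Fin n → ℝ) × (Fin m → ℝ) × (Fin m → ℝ)))
    (hM : MaxMonoPH M)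
    (hs1 : (0 : Fin n → ℝ) ∈ rint {fS : Fin n → ℝ | ∃ eS y u, (fS, eS, y, u) ∈ M})
    (hs2 : ∃ ebar : Fin n → ℝ,
      ebar ∈ rint {eS : Fin n → ℝ | ∃ y u, ((0 : Fin n → ℝ), eS, y, u) ∈ M}) :
    MaxMono2 {p : (Fin m → ℝ) × (Fin m → ℝ) | ∃ eS : Fin n → ℝ,
      ((0 : Fin n → ℝ), eS, p.1, p.2) ∈ M} :=
  steadyState_maxMonotone_general M hM hs1
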